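/- Let H be a complex separable Hilbert space, let B be a densely defined closed linear operator in H, and let A be a bounded operator on H such that both A and AB are normal. If BA is hyponormal and A*AB ⊂ BA*A, then BA is normal. -/

import Mathlib

noncomputable section

variable {H : Type*} [NormedAddCommGroup H] [InnerProductSpace ℂ H] [CompleteSpace H]

namespace LinearPMap

/-- The composition `S ∘ T` of two partially defined linear operators, with its natural
domain `{x ∈ D(T) : T x ∈ D(S)}`. -/
noncomputable def pcomp (S T : H →ₗ.[ℂ] H) : H →ₗ.[ℂ] H :=
  { domain := (S.domain.comap T.toFun).map T.domain.subtype
    toFun := (S.toFun.comp ((T.toFun.comp (S.domain.comap T.toFun).subtype).codRestrict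
        S.domain fun x => x.2)).comp
      (Submodule.equivMapOfInjective T.domain.subtype Subtype.val_injective
        (S.domain.comap T.toFun)).symm.toLinearMap }

/-- A bounded operator viewed as a partially defined operator with domain the
whole space. -/
noncomputable def ofCLM (A : H →L[ℂ] H) : H →ₗ.[ℂ] H :=
  A.toLinearMap.toPMap ⊤

/-- An unbounded densely defined operator is *normal* if it is closed and
`N N* = N* N` (including equality of the natural domains). -/
def IsNormalPMap (N : H →ₗ.[ℂ] H) : Prop :=
  Dense (N.domain : Set H) ∧ N.IsClosed ∧ N.pcomp N.adjoint = N.adjoint.pcomp N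

end LinearPMap

open LinearPMap ContinuousLinearMap

/-- A bounded operator `T` is *normal* if `T T* = T* T`. -/
def IsNormalOp (T : H →L[ℂ] H) : Prop :=
  T * ContinuousLinearMap.adjoint T = ContinuousLinearMap.adjoint T * T

/-- A densely defined operator `T` is *hyponormal* if `D(T) ⊆ D(T*)` and
`‖T* x‖ ≤ ‖T x‖` for every `x ∈ D(T)`. -/
def IsHyponormalPMap (T : H →ₗ.[ℂ] H) : Prop :=
  ∀ x : T.domain, ∃ hx : (x : H) ∈ T.adjoint.domain, ‖T.adjoint ⟨x, hx⟩‖ ≤ ‖T x‖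

/-!
Write `A = U P = P U` with `U` unitary and `P = |A|`. The hypothesis `A* A B ⊂ B A* A` passes to
limits of polynomials in `A* A` because `B` is closed, so `P B ⊂ B P`; hence
`U⁻¹ (A B) U = P B U ⊂ B P U = B A`, and `B A` extends a unitary conjugate of the normal operator
`A B`. Such an extension is not proper: if `N` is normal, `N ⊂ T` and `D(T) ⊆ D(T*)`, then
`D(T) ⊆ D(T*) ⊆ D(N*) = D(N)`. For `D(N*) ⊆ D(N)`, note that `‖N x‖ = ‖N* x‖` on
`D(N N*)`, which is a core for `N*`.
-/

open scoped InnerProductSpace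

section Composition

variable {E : Type*} [NormedAddCommGroup E] [InnerProductSpace ℂ E]

theorem mem_graph_pcomp_iff {S T : E →ₗ.[ℂ] E} {x z : E} :
    (x, z) ∈ (S.pcomp T).graph ↔ ∃ y, (x, y) ∈ T.graph ∧ (y, z) ∈ S.graph := by
  let e := Submodule.equivMapOfInjective T.domain.subtype Subtype.val_injective
    (S.domain.comap T.toFun)
  have coe_e (v) : (e v : E) = v.1 := Submodule.coe_equivMapOfInjective_apply _ _ _ v
  have pcomp_e (v) : S.pcomp T (e v) = S ⟨T v.1, v.2⟩ :=
    congrArg (fun u : S.domain.comap T.toFun => S ⟨T u.1, u.2⟩) (e.symm_apply_apply v)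
  simp only [LinearPMap.mem_graph_iff]
  constructor
  · rintro ⟨w, rfl, rfl⟩
    obtain ⟨v, rfl⟩ := e.surjective w
    exact ⟨T v.1, ⟨v.1, (coe_e v).symm, rfl⟩, ⟨T v.1, v.2⟩, rfl, (pcomp_e v).symm⟩
  · rintro ⟨_, ⟨a, rfl, rfl⟩, b, hb, rfl⟩
    have hTa : T a ∈ S.domain := hb ▸ b.2
    exact ⟨e ⟨a, hTa⟩, coe_e _, (pcomp_e _).trans (congrArg S (Subtype.ext hb.symm))⟩

theorem mem_graph_ofCLM_iff {A : E →L[ℂ] E} {x y : E} : (x, y) ∈ (ofCLM A).graph ↔ A x = y := by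
  simp [ofCLM]

theorem mem_graph_pcomp_ofCLM_iff {B : E →ₗ.[ℂ] E} {A : E →L[ℂ] E} {x z : E} :
    (x, z) ∈ (B.pcomp (ofCLM A)).graph ↔ (A x, z) ∈ B.graph := by
  simp only [mem_graph_pcomp_iff, mem_graph_ofCLM_iff, exists_eq_left']

theorem mem_graph_ofCLM_pcomp_iff {B : E →ₗ.[ℂ] E} {A : E →L[ℂ] E} {x z : E} :
    (x, z) ∈ ((ofCLM A).pcomp B).graph ↔ ∃ y, (x, y) ∈ B.graph ∧ A y = z := by
  simp only [mem_graph_pcomp_iff, mem_graph_ofCLM_iff]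

theorem ofCLM_pcomp_le_pcomp_ofCLM_iff {B : E →ₗ.[ℂ] E} {A : E →L[ℂ] E} :
    (ofCLM A).pcomp B ≤ B.pcomp (ofCLM A) ↔ ∀ x y, (x, y) ∈ B.graph → (A x, A y) ∈ B.graph := by
  rw [← LinearPMap.le_graph_iff]
  constructor
  · intro hle x y hxy
    exact mem_graph_pcomp_ofCLM_iff.1 (hle (mem_graph_ofCLM_pcomp_iff.2 ⟨y, hxy, rfl⟩))
  · rintro h ⟨x, z⟩ hxz
    obtain ⟨y, hxy, rfl⟩ := mem_graph_ofCLM_pcomp_iff.1 hxz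
    exact mem_graph_pcomp_ofCLM_iff.2 (h x y hxy)

end Composition

section Adjoint

variable {𝕜 E F : Type*} [RCLike 𝕜] [NormedAddCommGroup E] [InnerProductSpace 𝕜 E]
  [NormedAddCommGroup F] [InnerProductSpace 𝕜 F]

/-- The graph of `T` in the Hilbert sum `WithLp 2 (E × F)`, where it has an orthogonal complement;
`E × F` itself carries the sup norm. -/
def l2Graph (T : E →ₗ.[𝕜] F) : Submodule 𝕜 (WithLp 2 (E × F)) :=
  T.graph.comap (WithLp.linearEquiv 2 𝕜 (E × F)).toLinearMap

theorem isClosed_l2Graph {T : E →ₗ.[𝕜] F} (hT : T.IsClosed) :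
    IsClosed (l2Graph T : Set (WithLp 2 (E × F))) :=
  IsClosed.preimage (WithLp.prod_continuous_ofLp 2 E F) hT

theorem eq_of_le_of_forall_orthogonal [CompleteSpace E] [CompleteSpace F] {S T : E →ₗ.[𝕜] F}
    (hS : S.IsClosed) (hST : S ≤ T)
    (h : ∀ x y, (x, y) ∈ T.graph → (∀ a b, (a, b) ∈ S.graph → ⟪a, x⟫_𝕜 + ⟪b, y⟫_𝕜 = 0) → x = 0) :
    S = T := by
  have : CompleteSpace (l2Graph S) := (isClosed_l2Graph hS).completeSpace_coe
  have hle : l2Graph S ≤ l2Graph T := Submodule.comap_mono (LinearPMap.le_graph_of_le hST)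
  have hbot : (l2Graph S)ᗮ ⊓ l2Graph T = ⊥ := by
    rw [Submodule.eq_bot_iff]
    rintro p ⟨hpS, hpT⟩
    have hfst : p.fst = 0 := h p.fst p.snd hpT fun a b hab =>
      (Submodule.mem_orthogonal _ _).1 hpS (WithLp.toLp 2 (a, b)) hab
    have hsnd : p.snd = 0 := T.graph_fst_eq_zero_snd hpT hfst
    exact WithLp.ofLp_injective 2 (Prod.ext hfst hsnd)
  have heq : l2Graph S = l2Graph T := by
    rw [← Submodule.sup_orthogonal_inf_of_hasOrthogonalProjection hle, hbot, sup_bot_eq]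
  exact LinearPMap.eq_of_eq_graph
    (Submodule.comap_injective_of_surjective (WithLp.linearEquiv 2 𝕜 (E × F)).surjective heq)

theorem hasCore_of_forall_orthogonal [CompleteSpace E] [CompleteSpace F] {T : E →ₗ.[𝕜] F}
    {C : Submodule 𝕜 E} (hT : T.IsClosed) (hC : C ≤ T.domain)
    (h : ∀ x y, (x, y) ∈ T.graph →
      (∀ a ∈ C, ∀ b, (a, b) ∈ T.graph → ⟪a, x⟫_𝕜 + ⟪b, y⟫_𝕜 = 0) → x = 0) :
    T.HasCore C := by
  have hclosable : (T.domRestrict C).IsClosable :=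
    hT.isClosable.leIsClosable LinearPMap.domRestrict_le
  have hle : (T.domRestrict C).closure ≤ T := by
    rw [← LinearPMap.le_graph_iff, ← hclosable.graph_closure_eq_closure_graph]
    exact Submodule.topologicalClosure_minimal _
      (LinearPMap.le_graph_of_le LinearPMap.domRestrict_le) hT
  refine ⟨hC, eq_of_le_of_forall_orthogonal hclosable.closure_isClosed hle fun x y hxy hS =>
    h x y hxy fun a ha b hab => hS a b ?_⟩
  apply LinearPMap.le_graph_of_le (LinearPMap.le_closure _)
  obtain ⟨v, rfl, rfl⟩ := (LinearPMap.mem_graph_iff _).1 hab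
  exact (LinearPMap.mem_graph_iff _).2 ⟨⟨v, ha, v.2⟩, rfl, LinearPMap.domRestrict_apply rfl⟩

theorem domain_le_of_hasCore {G : Type*} [NormedAddCommGroup G] [NormedSpace 𝕜 G] [CompleteSpace G]
    {S : E →ₗ.[𝕜] F} {T : E →ₗ.[𝕜] G} {C : Submodule 𝕜 E} (hS : S.IsClosed) (hC : S.HasCore C)
    (hT : T.IsClosed)
    (h : ∀ x ∈ C, ∀ y, (x, y) ∈ S.graph → ∃ z, (x, z) ∈ T.graph ∧ ‖z‖ ≤ ‖y‖) :
    S.domain ≤ T.domain := by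
  have h_restrict (p) (hp : p ∈ (S.domRestrict C).graph) :
      ∃ z, (p.1, z) ∈ T.graph ∧ ‖z‖ ≤ ‖p.2‖ := by
    have hpS := LinearPMap.le_graph_of_le LinearPMap.domRestrict_le hp
    exact h p.1 (LinearPMap.mem_domain_of_mem_graph hp).1 p.2 hpS
  intro x hx
  have hxS : (x, S ⟨x, hx⟩) ∈ (S.domRestrict C).graph.topologicalClosure := by
    rw [(hS.isClosable.leIsClosable LinearPMap.domRestrict_le).graph_closure_eq_closure_graph,
      hC.closure_eq]
    exact S.mem_graph ⟨x, hx⟩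
  obtain ⟨u, hu, hu_lim⟩ := mem_closure_iff_seq_limit.1 hxS
  choose z hz using fun n => (h_restrict (u n) (hu n)).imp fun _ => And.left
  have hdist (m n) : dist (z m) (z n) ≤ dist (u m).2 (u n).2 := by
    obtain ⟨w, hw, hw_le⟩ := h_restrict (u m - u n) (Submodule.sub_mem _ (hu m) (hu n))
    have hzw : z m - z n = w := T.mem_graph_snd_inj (T.graph.sub_mem (hz m) (hz n)) hw rfl
    rwa [dist_eq_norm, dist_eq_norm, hzw]
  have hz_cauchy : CauchySeq z := by
    have hu_cauchy := hu_lim.snd_nhds.cauchySeq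
    rw [Metric.cauchySeq_iff] at hu_cauchy ⊢
    exact fun ε hε => (hu_cauchy ε hε).imp fun N hN m hm n hn =>
      (hdist m n).trans_lt (hN m hm n hn)
  obtain ⟨v, hv⟩ := cauchySeq_tendsto_of_complete hz_cauchy
  exact LinearPMap.mem_domain_of_mem_graph
    (hT.mem_of_tendsto (hu_lim.fst_nhds.prodMk_nhds hv) (.of_forall hz))

variable [CompleteSpace E]

theorem mem_graph_adjoint_iff {T : E →ₗ.[𝕜] F} (hT : Dense (T.domain : Set E)) {y : F} {w : E} :
    (y, w) ∈ T.adjoint.graph ↔ ∀ a b, (a, b) ∈ T.graph → ⟪b, y⟫_𝕜 = ⟪a, w⟫_𝕜 := by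
  simp only [LinearPMap.adjoint_graph_eq_graph_adjoint hT, Submodule.mem_adjoint_iff, sub_eq_zero]

theorem adjoint_le_adjoint {S T : E →ₗ.[𝕜] F} (hS : Dense (S.domain : Set E)) (hST : S ≤ T) :
    T.adjoint ≤ S.adjoint := by
  have hT : Dense (T.domain : Set E) := hS.mono hST.1
  rw [← LinearPMap.le_graph_iff]
  rintro ⟨y, w⟩ hyw
  exact (mem_graph_adjoint_iff hS).2 fun a b hab =>
    (mem_graph_adjoint_iff hT).1 hyw a b (LinearPMap.le_graph_of_le hST hab)

theorem mem_orthogonal_l2Graph_iff {T : E →ₗ.[𝕜] F} (hT : Dense (T.domain : Set E))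
    {p : WithLp 2 (E × F)} : p ∈ (l2Graph T)ᗮ ↔ (p.snd, -p.fst) ∈ T.adjoint.graph := by
  simp only [Submodule.mem_orthogonal, mem_graph_adjoint_iff hT, inner_neg_right,
    eq_neg_iff_add_eq_zero]
  constructor
  · intro h a b hab
    exact (add_comm _ _).trans (h (WithLp.toLp 2 (a, b)) hab)
  · intro h q hq
    exact (add_comm _ _).trans (h q.fst q.snd hq)

theorem exists_add_apply_adjoint_apply_eq [CompleteSpace F] {T : E →ₗ.[𝕜] F}
    (hT : Dense (T.domain : Set E)) (hTc : T.IsClosed) (h : F) :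
    ∃ y x z, (y, x) ∈ T.adjoint.graph ∧ (x, z) ∈ T.graph ∧ y + z = h := by
  have : CompleteSpace (l2Graph T) := (isClosed_l2Graph hTc).completeSpace_coe
  obtain ⟨g, hg, k, hk, hgk⟩ := (l2Graph T).exists_add_mem_mem_orthogonal (WithLp.toLp 2 (0, h))
  have hfst : -k.fst = g.fst :=
    (eq_neg_of_add_eq_zero_left (congrArg WithLp.fst hgk).symm).symm
  have hsnd : k.snd + g.snd = h := (add_comm _ _).trans (congrArg WithLp.snd hgk).symm
  exact ⟨k.snd, g.fst, g.snd, hfst ▸ (mem_orthogonal_l2Graph_iff hT).1 hk, hg, hsnd⟩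

end Adjoint

section Normal

theorem hasCore_adjoint_domain_pcomp {T : H →ₗ.[ℂ] H} (hT : Dense (T.domain : Set H))
    (hTc : T.IsClosed) : T.adjoint.HasCore (T.pcomp T.adjoint).domain := by
  refine hasCore_of_forall_orthogonal (LinearPMap.adjoint_isClosed hT)
    (Submodule.map_subtype_le _ _) fun x y hxy horth => ?_
  obtain ⟨a, b, c, hab, hbc, hx⟩ := exists_add_apply_adjoint_apply_eq hT hTc x
  have ha : a ∈ (T.pcomp T.adjoint).domain :=
    LinearPMap.mem_domain_of_mem_graph (mem_graph_pcomp_iff.2 ⟨b, hab, hbc⟩)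
  rw [← inner_self_eq_zero (𝕜 := ℂ)]
  calc ⟪x, x⟫_ℂ = ⟪a, x⟫_ℂ + ⟪c, x⟫_ℂ := by rw [← inner_add_left, hx]
    _ = ⟪a, x⟫_ℂ + ⟪b, y⟫_ℂ := by rw [(mem_graph_adjoint_iff hT).1 hxy b c hbc]
    _ = 0 := horth a ha b hab

theorem exists_mem_graph_norm_eq_of_isNormalPMap {N : H →ₗ.[ℂ] H} (hN : IsNormalPMap N) {x y : H}
    (hx : x ∈ (N.pcomp N.adjoint).domain) (hxy : (x, y) ∈ N.adjoint.graph) :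
    ∃ z, (x, z) ∈ N.graph ∧ ‖z‖ = ‖y‖ := by
  obtain ⟨hd, -, hcomm⟩ := hN
  obtain ⟨c, hc⟩ := LinearPMap.mem_domain_iff.1 hx
  obtain ⟨y', hxy', hyc⟩ := mem_graph_pcomp_iff.1 hc
  obtain rfl : y = y' := N.adjoint.mem_graph_snd_inj hxy hxy' rfl
  obtain ⟨z, hxz, hzc⟩ := mem_graph_pcomp_iff.1 (hcomm ▸ hc)
  have hinner : ⟪z, z⟫_ℂ = ⟪y, y⟫_ℂ := by
    calc ⟪z, z⟫_ℂ = ⟪x, c⟫_ℂ := (mem_graph_adjoint_iff hd).1 hzc x z hxz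
      _ = starRingEnd ℂ ⟪c, x⟫_ℂ := (inner_conj_symm _ _).symm
      _ = starRingEnd ℂ ⟪y, y⟫_ℂ := by rw [(mem_graph_adjoint_iff hd).1 hxy y c hyc]
      _ = ⟪y, y⟫_ℂ := inner_conj_symm _ _
  refine ⟨z, hxz, ?_⟩
  rw [norm_eq_sqrt_re_inner (𝕜 := ℂ), hinner, ← norm_eq_sqrt_re_inner]

theorem adjoint_domain_le_of_isNormalPMap {N : H →ₗ.[ℂ] H} (hN : IsNormalPMap N) :
    N.adjoint.domain ≤ N.domain :=
  domain_le_of_hasCore (LinearPMap.adjoint_isClosed hN.1)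
    (hasCore_adjoint_domain_pcomp hN.1 hN.2.1) hN.2.1 fun _ hx _ hxy =>
      (exists_mem_graph_norm_eq_of_isNormalPMap hN hx hxy).imp fun _ => And.imp_right le_of_eq

theorem eq_of_isNormalPMap_of_le {N T : H →ₗ.[ℂ] H} (hN : IsNormalPMap N) (hNT : N ≤ T)
    (hT : T.domain ≤ T.adjoint.domain) : N = T :=
  LinearPMap.eq_of_le_of_domain_eq hNT <| le_antisymm hNT.1 <|
    hT.trans <| (adjoint_le_adjoint hN.1 hNT).1.trans <| adjoint_domain_le_of_isNormalPMap hN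

end Normal

section UnitaryConj

variable {𝕜 E F : Type*} [RCLike 𝕜] [NormedAddCommGroup E] [InnerProductSpace 𝕜 E]
  [NormedAddCommGroup F] [InnerProductSpace 𝕜 F]

/-- The unitary conjugate `U⁻¹ N U`, with domain `U⁻¹ D(N)`, which is normal along with `N`. -/
def unitaryConj (U : E ≃ₗᵢ[𝕜] F) (N : F →ₗ.[𝕜] F) : E →ₗ.[𝕜] E where
  domain := N.domain.comap U.toLinearMap
  toFun := U.symm.toLinearMap ∘ₗ N.toFun ∘ₗ U.toLinearMap.submoduleComap N.domain

variable (U : E ≃ₗᵢ[𝕜] F) {N : F →ₗ.[𝕜] F}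

theorem mem_graph_unitaryConj_iff {x z : E} :
    (x, z) ∈ (unitaryConj U N).graph ↔ (U x, U z) ∈ N.graph := by
  simp only [LinearPMap.mem_graph_iff]
  constructor
  · rintro ⟨v, rfl, rfl⟩
    exact ⟨⟨U v, v.2⟩, rfl, (U.apply_symm_apply _).symm⟩
  · rintro ⟨w, hw, hz⟩
    have hx : U x ∈ N.domain := hw ▸ w.2
    obtain rfl : w = ⟨U x, hx⟩ := Subtype.ext hw
    exact ⟨⟨x, hx⟩, rfl, U.symm_apply_eq.2 hz⟩

theorem dense_domain_unitaryConj (hN : Dense (N.domain : Set F)) :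
    Dense ((unitaryConj U N).domain : Set E) :=
  hN.preimage U.toHomeomorph.isOpenMap

theorem isClosed_unitaryConj (hN : N.IsClosed) : (unitaryConj U N).IsClosed := by
  have hgraph : ((unitaryConj U N).graph : Set (E × E)) = Prod.map U U ⁻¹' N.graph :=
    Set.ext fun _ => mem_graph_unitaryConj_iff U
  rw [LinearPMap.IsClosed, hgraph]
  exact IsClosed.preimage (U.continuous.prodMap U.continuous) hN

theorem adjoint_unitaryConj [CompleteSpace E] [CompleteSpace F] (hN : Dense (N.domain : Set F)) :
    (unitaryConj U N).adjoint = unitaryConj U N.adjoint := by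
  apply LinearPMap.eq_of_eq_graph
  ext ⟨y, w⟩
  simp only [mem_graph_unitaryConj_iff, mem_graph_adjoint_iff hN,
    mem_graph_adjoint_iff (dense_domain_unitaryConj U hN), U.surjective.forall, U.inner_map_map]

end UnitaryConj

section UnitaryConjNormal

variable {E F : Type*} [NormedAddCommGroup E] [InnerProductSpace ℂ E]
  [NormedAddCommGroup F] [InnerProductSpace ℂ F] (U : E ≃ₗᵢ[ℂ] F)

theorem unitaryConj_pcomp (S T : F →ₗ.[ℂ] F) :
    unitaryConj U (S.pcomp T) = (unitaryConj U S).pcomp (unitaryConj U T) := by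
  apply LinearPMap.eq_of_eq_graph
  ext ⟨x, z⟩
  simp only [mem_graph_unitaryConj_iff, mem_graph_pcomp_iff, U.surjective.exists]

theorem isNormalPMap_unitaryConj [CompleteSpace E] [CompleteSpace F] {N : F →ₗ.[ℂ] F}
    (hN : IsNormalPMap N) : IsNormalPMap (unitaryConj U N) := by
  refine ⟨dense_domain_unitaryConj U hN.1, isClosed_unitaryConj U hN.2.1, ?_⟩
  rw [adjoint_unitaryConj U hN.1, ← unitaryConj_pcomp, ← unitaryConj_pcomp, hN.2.2]

end UnitaryConjNormal

section PolarDecomposition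

variable {𝕜 E : Type*} [RCLike 𝕜] [NormedAddCommGroup E] [InnerProductSpace 𝕜 E]
  [CompleteSpace E] {S T : E →L[𝕜] E}

theorem norm_apply_eq_of_star_mul_self_eq (h : star S * S = star T * T) (x : E) :
    ‖S x‖ = ‖T x‖ := by
  have h' : S.adjoint ∘L S = T.adjoint ∘L T := h
  rw [apply_norm_eq_sqrt_inner_adjoint_left, h', ← apply_norm_eq_sqrt_inner_adjoint_left]

theorem denseRange_coprod_ker_of_isStarNormal (hT : IsStarNormal T) :
    DenseRange (T.toLinearMap.coprod T.ker.subtype) := by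
  have hperp : (LinearMap.range (T.toLinearMap.coprod T.ker.subtype))ᗮ = ⊥ := by
    rw [LinearMap.range_coprod, Submodule.range_subtype, ← Submodule.inf_orthogonal,
      hT.orthogonal_range, Submodule.inf_orthogonal_eq_bot]
  rw [DenseRange, ← LinearMap.coe_range, Submodule.dense_iff_topologicalClosure_eq_top,
    Submodule.topologicalClosure_eq_top_iff, hperp]

theorem inner_apply_eq_zero_of_isStarNormal (hT : IsStarNormal T) {k : E} (hk : k ∈ T.ker)
    (x : E) : ⟪T x, k⟫_𝕜 = 0 := by
  rw [← hT.orthogonal_range] at hk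
  exact hk (T x) ⟨x, rfl⟩

theorem exists_linearIsometryEquiv_apply_eq (hS : IsStarNormal S) (hT : IsStarNormal T)
    (h : ∀ x, ‖S x‖ = ‖T x‖) :
    ∃ U : E ≃ₗᵢ[𝕜] E, (∀ x, U (S x) = T x) ∧ ∀ k ∈ S.ker, U k = k := by
  have hker : S.ker = T.ker := by
    ext k
    exact norm_eq_zero.symm.trans ((h k).congr_left.trans norm_eq_zero)
  have hTdense : DenseRange (T.toLinearMap.coprod S.ker.subtype) := by
    rw [hker]
    exact denseRange_coprod_ker_of_isStarNormal hT
  have hnorm (p : E × S.ker) : ‖T p.1 + p.2‖ = ‖S p.1 + p.2‖ := by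
    rw [← sq_eq_sq₀ (norm_nonneg _) (norm_nonneg _), sq, sq,
      norm_add_sq_eq_norm_sq_add_norm_sq_of_inner_eq_zero _ _
        (inner_apply_eq_zero_of_isStarNormal hT (hker ▸ p.2.2) p.1),
      norm_add_sq_eq_norm_sq_add_norm_sq_of_inner_eq_zero _ _
        (inner_apply_eq_zero_of_isStarNormal hS p.2.2 p.1), h]
  let U := (LinearEquiv.refl 𝕜 (E × S.ker)).extendOfIsometry (S.toLinearMap.coprod S.ker.subtype)
    (T.toLinearMap.coprod S.ker.subtype) (denseRange_coprod_ker_of_isStarNormal hS) hTdense hnorm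
  have hU (x : E) (k : S.ker) : U (S x + k) = T x + k :=
    LinearEquiv.extendOfIsometry_eq _ _ _ _ _ hnorm (x, k)
  refine ⟨U, fun x => ?_, fun k hk => ?_⟩
  · simpa using hU x 0
  · simpa using hU 0 ⟨k, hk⟩

theorem exists_polar_of_isStarNormal {A : H →L[ℂ] H} (hA : IsStarNormal A) :
    ∃ U : H ≃ₗᵢ[ℂ] H, (∀ x, U (CFC.abs A x) = A x) ∧ ∀ x, CFC.abs A (U x) = A x := by
  have habs : IsSelfAdjoint (CFC.abs A) := (CFC.abs_nonneg A).isSelfAdjoint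
  have hnorm : ∀ x, ‖CFC.abs A x‖ = ‖A x‖ := norm_apply_eq_of_star_mul_self_eq <| by
    rw [habs.star_eq, CFC.abs_mul_abs]
  obtain ⟨U, hU, hUker⟩ := exists_linearIsometryEquiv_apply_eq habs.isStarNormal hA hnorm
  refine ⟨U, hU, congrFun ?_⟩
  refine (denseRange_coprod_ker_of_isStarNormal habs.isStarNormal).equalizer
    ((CFC.abs A).continuous.comp U.continuous) A.continuous (funext fun ⟨x, k, hk⟩ => ?_)
  have hPk : CFC.abs A k = 0 := hk
  have hAk : A k = 0 := by rw [← norm_eq_zero, ← hnorm, hPk, norm_zero]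
  have hcomm : CFC.abs A (A x) = A (CFC.abs A x) := DFunLike.congr_fun (CFC.commute_abs_self A hA) x
  calc CFC.abs A (U (CFC.abs A x + k)) = CFC.abs A (A x) + CFC.abs A k := by
        rw [_root_.map_add U, hU, hUker k hk, _root_.map_add]
    _ = A (CFC.abs A x) + A k := by rw [hcomm, hPk, hAk]
    _ = A (CFC.abs A x + k) := (_root_.map_add A _ _).symm

end PolarDecomposition

section BoundedCommutant

theorem abs_mem_of_star_mul_self_mem {R S : Type*} [NonUnitalCStarAlgebra R] [PartialOrder R]
    [StarOrderedRing R] [SetLike S R] [NonUnitalSubringClass S R] [SMulMemClass S ℂ R]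
    [StarMemClass S R] {s : S} (hs : IsClosed (s : Set R)) {a : R} (ha : star a * a ∈ s) :
    CFC.abs a ∈ s := by
  rw [CFC.abs, CFC.sqrt_eq_real_sqrt _ (star_mul_self_nonneg a)]
  exact cfcₙ_mem (𝕜' := ℂ) (hs := hs) _ ha

variable {𝕜 E : Type*} [RCLike 𝕜] [NormedAddCommGroup E] [InnerProductSpace 𝕜 E]
  [CompleteSpace E]

/-- The commutant of a partially defined operator `B`: the bounded operators `P` such that
`P B ⊂ B P` and `P* B ⊂ B P*`, both inclusions being expressed through the graph of `B`.
If `B` is closed, this is a closed star-subalgebra, hence contains `|A|` together with `A* A`. -/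
def boundedCommutant (B : E →ₗ.[𝕜] E) : StarSubalgebra 𝕜 (E →L[𝕜] E) where
  carrier := {P | ∀ p ∈ B.graph, (P p.1, P p.2) ∈ B.graph ∧ (star P p.1, star P p.2) ∈ B.graph}
  mul_mem' hP hQ p hp :=
    ⟨(hP _ (hQ p hp).1).1, by rw [star_mul]; exact (hQ _ (hP p hp).2).2⟩
  add_mem' hP hQ p hp :=
    ⟨B.graph.add_mem (hP p hp).1 (hQ p hp).1,
      by rw [star_add]; exact B.graph.add_mem (hP p hp).2 (hQ p hp).2⟩
  algebraMap_mem' c p hp :=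
    ⟨B.graph.smul_mem c hp,
      by rw [← algebraMap_star_comm]; exact B.graph.smul_mem (star c) hp⟩
  star_mem' hP p hp := ⟨(hP p hp).2, by simpa only [star_star] using (hP p hp).1⟩

theorem isClosed_boundedCommutant {B : E →ₗ.[𝕜] E} (hB : B.IsClosed) :
    IsClosed (boundedCommutant B : Set (E →L[𝕜] E)) := by
  have hcarrier : (boundedCommutant B : Set (E →L[𝕜] E)) = ⋂ p ∈ B.graph,
      {P : E →L[𝕜] E | (P p.1, P p.2) ∈ B.graph} ∩
        {P : E →L[𝕜] E | (star P p.1, star P p.2) ∈ B.graph} := by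
    ext P
    simp only [Set.mem_iInter]
    rfl
  rw [hcarrier]
  exact isClosed_biInter fun p _ =>
    (hB.preimage (by fun_prop : Continuous fun P : E →L[𝕜] E => (P p.1, P p.2))).inter
      (hB.preimage (by fun_prop : Continuous fun P : E →L[𝕜] E => (star P p.1, star P p.2)))

theorem abs_apply_mem_graph {B : H →ₗ.[ℂ] H} {A : H →L[ℂ] H} (hB : B.IsClosed)
    (h : (ofCLM (A.adjoint * A)).pcomp B ≤ B.pcomp (ofCLM (A.adjoint * A))) {x y : H}
    (hxy : (x, y) ∈ B.graph) : (CFC.abs A x, CFC.abs A y) ∈ B.graph := by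
  have hmem : star A * A ∈ boundedCommutant B := fun p hp => by
    have hp' := ofCLM_pcomp_le_pcomp_ofCLM_iff.1 h p.1 p.2 hp
    exact ⟨hp', by rwa [(IsSelfAdjoint.star_mul_self A).star_eq]⟩
  exact (abs_mem_of_star_mul_self_mem (isClosed_boundedCommutant hB) hmem (x, y) hxy).1

end BoundedCommutant

theorem unitaryConj_pcomp_le {E : Type*} [NormedAddCommGroup E] [InnerProductSpace ℂ E]
    {B : E →ₗ.[ℂ] E} {A P : E →L[ℂ] E} {U : E ≃ₗᵢ[ℂ] E} (hUP : ∀ x, U (P x) = A x)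
    (hPU : ∀ x, P (U x) = A x) (hPB : ∀ x y, (x, y) ∈ B.graph → (P x, P y) ∈ B.graph) :
    unitaryConj U ((ofCLM A).pcomp B) ≤ B.pcomp (ofCLM A) := by
  rw [← LinearPMap.le_graph_iff]
  rintro ⟨x, z⟩ hxz
  obtain ⟨y, hxy, hyz⟩ := mem_graph_ofCLM_pcomp_iff.1 ((mem_graph_unitaryConj_iff U).1 hxz)
  obtain rfl : P y = z := U.injective ((hUP y).trans hyz)
  rw [mem_graph_pcomp_ofCLM_iff, ← hPU]
  exact hPB _ _ hxy

theorem kaplansky_unbounded_backward_general (B : H →ₗ.[ℂ] H) (A : H →L[ℂ] H)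
    (hBclosed : B.IsClosed) (hA : IsNormalOp A) (hAB : IsNormalPMap ((ofCLM A).pcomp B))
    (hBA : (B.pcomp (ofCLM A)).domain ≤ (B.pcomp (ofCLM A)).adjoint.domain)
    (h : (ofCLM (A.adjoint * A)).pcomp B ≤ B.pcomp (ofCLM (A.adjoint * A))) :
    IsNormalPMap (B.pcomp (ofCLM A)) := by
  obtain ⟨U, hUP, hPU⟩ := exists_polar_of_isStarNormal ⟨Eq.symm hA⟩
  have hconj : IsNormalPMap (unitaryConj U ((ofCLM A).pcomp B)) := isNormalPMap_unitaryConj U hAB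
  have hle : unitaryConj U ((ofCLM A).pcomp B) ≤ B.pcomp (ofCLM A) :=
    unitaryConj_pcomp_le hUP hPU fun _ _ => abs_apply_mem_graph hBclosed h
  exact eq_of_isNormalPMap_of_le hconj hle hBA ▸ hconj

/-- If `B` is densely defined and closed, `A` is bounded, `A` and `AB` are normal,
`BA` is hyponormal and `A* A B ⊂ B A* A`, then `BA` is normal. -/
theorem kaplansky_unbounded_backward [TopologicalSpace.SeparableSpace H] (B : H →ₗ.[ℂ] H) (A : H →L[ℂ] H)
    (hBdense : Dense (B.domain : Set H)) (hBclosed : B.IsClosed)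
    (hA : IsNormalOp A) (hAB : IsNormalPMap ((ofCLM A).pcomp B))
    (hBA : IsHyponormalPMap (B.pcomp (ofCLM A)))
    (h : (ofCLM (ContinuousLinearMap.adjoint A * A)).pcomp B ≤
      B.pcomp (ofCLM (ContinuousLinearMap.adjoint A * A))) :
    IsNormalPMap (B.pcomp (ofCLM A)) := by
  exact kaplansky_unbounded_backward_general B A hBclosed hA hAB (fun x hx => (hBA ⟨x, hx⟩).1) h
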